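/- Let X = (1/2)·(a† + a) and P = iħ·(a† − a) in End_ℂ(V) (these satisfy X∘P − P∘X = iħ·id). Let α : ℕ → ℝ be a real sequence with α_0 = 1, set g_α(m,n,s) = (i/2)^s · (m!·n!/((m−s)!·(n−s)!)) · Σ_{k=0}^s (2i)^k · α_k/(s−k)!, and define the linear map Ψ_α : ℂ[x,p] → End_ℂ(V) on the monomial basis by Ψ_α(p^m x^n) = Σ_{s=0}^{min(m,n)} g_α(m,n,s) · ħ^s · P^{m−s} ∘ X^{n−s}. Then for every polynomial A ∈ ℂ[x,p] with real coefficients, the operator Ψ_α(A) is symmetric with respect to the standard basis: for all j, k ∈ ℕ, the j-th component of Ψ_α(A) e_k equals the complex conjugate of the k-th component of Ψ_α(A) e_j. -/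

import Mathlib

open Complex MvPolynomial Finset

noncomputable section

/-- The standard basis vector `e n` of `V = ℕ →₀ ℂ`. -/
def e (n : ℕ) : ℕ →₀ ℂ := Finsupp.single n 1

/-- The destruction operator `a`: `a (e 0) = 0`, `a (e (n+1)) = √(n+1) • e n`. -/
def aop : (ℕ →₀ ℂ) →ₗ[ℂ] (ℕ →₀ ℂ) :=
  Finsupp.lsum ℂ fun n => match n with
    | 0 => 0
    | k + 1 => ((Real.sqrt (k + 1) : ℝ) : ℂ) • Finsupp.lsingle k

/-- The creation operator `a†`: `a† (e n) = √(n+1) • e (n+1)`. -/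
def adop : (ℕ →₀ ℂ) →ₗ[ℂ] (ℕ →₀ ℂ) :=
  Finsupp.lsum ℂ fun n => ((Real.sqrt (n + 1) : ℝ) : ℂ) • Finsupp.lsingle (n + 1)

/-- `F^{(m,n)} = (−iℏ·a)^m ∘ (a†)^n` as an element of `End_ℂ(V)`. -/
def F (ℏ : ℝ) (m n : ℕ) : Module.End ℂ (ℕ →₀ ℂ) :=
  ((-(Complex.I * ℏ)) • (aop : Module.End ℂ (ℕ →₀ ℂ))) ^ m * (adop : Module.End ℂ (ℕ →₀ ℂ)) ^ n

/-- The polynomial algebra ℂ[x,p] in two commuting variables. -/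
abbrev Pxp := MvPolynomial (Fin 2) ℂ

/-- The variable `x`. -/
def xv : Pxp := X 0
/-- The variable `p`. -/
def pv : Pxp := X 1

/-- The partial derivative `∂_x` as a linear endomorphism. -/
def Dx : Module.End ℂ Pxp := (pderiv (0 : Fin 2)).toLinearMap
/-- The partial derivative `∂_p` as a linear endomorphism. -/
def Dp : Module.End ℂ Pxp := (pderiv (1 : Fin 2)).toLinearMap

/-- The position operator `X = ½(a† + a)`. -/
def Xop : Module.End ℂ (ℕ →₀ ℂ) :=
  (1 / 2 : ℂ) • ((adop : Module.End ℂ (ℕ →₀ ℂ)) + (aop : Module.End ℂ (ℕ →₀ ℂ)))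

/-- The momentum operator `P = iℏ(a† − a)`. -/
def Pop (ℏ : ℝ) : Module.End ℂ (ℕ →₀ ℂ) :=
  (Complex.I * ℏ) • ((adop : Module.End ℂ (ℕ →₀ ℂ)) - (aop : Module.End ℂ (ℕ →₀ ℂ)))

/-- `g_α(m,n,s) = (i/2)^s (m!n!/((m−s)!(n−s)!)) Σ_{k=0}^s (2i)^k α_k/(s−k)!`. -/
def gα (α : ℕ → ℝ) (m n s : ℕ) : ℂ :=
  (Complex.I / 2) ^ s *
    ((m.factorial * n.factorial : ℂ) / ((m - s).factorial * (n - s).factorial)) *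
    ∑ k ∈ Finset.range (s + 1), (2 * Complex.I) ^ k * (α k : ℂ) / ((s - k).factorial : ℂ)

/-- `T'` is the formal adjoint of `T`. -/
def Adj (T T' : Module.End ℂ (ℕ →₀ ℂ)) : Prop :=
  ∀ j k : ℕ, (T (e k)) j = (starRingEnd ℂ) ((T' (e j)) k)

theorem apply_eq_sum (T : Module.End ℂ (ℕ →₀ ℂ)) (v : ℕ →₀ ℂ) (s : Finset ℕ)
    (hs : v.support ⊆ s) (j : ℕ) : (T v) j = ∑ l ∈ s, v l * (T (e l)) j := by
  have h : v = ∑ l ∈ s, v l • e l := by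
    conv_lhs => rw [← Finsupp.sum_single v]
    rw [Finsupp.sum_of_support_subset v hs _ (by simp)]
    simp [e]
  conv_lhs => rw [h]
  simp [Finsupp.finsetSum_apply]

theorem Adj.mul {T T' S S' : Module.End ℂ (ℕ →₀ ℂ)} (hT : Adj T T') (hS : Adj S S') :
    Adj (T * S) (S' * T') := by
  intro j k
  rw [Module.End.mul_apply, Module.End.mul_apply,
    apply_eq_sum T (S (e k)) ((S (e k)).support ∪ (T' (e j)).support) subset_union_left,
    apply_eq_sum S' (T' (e j)) ((S (e k)).support ∪ (T' (e j)).support) subset_union_right,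
    map_sum]
  refine Finset.sum_congr rfl fun l _ => ?_
  rw [hT j l, hS l k, map_mul, mul_comm]

theorem Adj.add {T T' S S' : Module.End ℂ (ℕ →₀ ℂ)} (hT : Adj T T') (hS : Adj S S') :
    Adj (T + S) (T' + S') := by
  intro j k
  simp [hT j k, hS j k]

theorem Adj.smul {T T' : Module.End ℂ (ℕ →₀ ℂ)} (c : ℂ) (hT : Adj T T') :
    Adj (c • T) ((starRingEnd ℂ c) • T') := by
  intro j k
  simp [hT j k]

theorem Adj.smul_real {T T' : Module.End ℂ (ℕ →₀ ℂ)} (c : ℝ) (hT : Adj T T') :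
    Adj ((c : ℂ) • T) ((c : ℂ) • T') := by
  simpa using hT.smul (c : ℂ)

theorem Adj.one : Adj 1 1 := by
  intro j k
  simp [e, Finsupp.single_apply, eq_comm]

theorem Adj.pow {T : Module.End ℂ (ℕ →₀ ℂ)} (hT : Adj T T) (n : ℕ) : Adj (T ^ n) (T ^ n) := by
  induction n with
  | zero => simpa using Adj.one
  | succ n ih =>
    have := ih.mul hT
    rwa [← pow_succ, ← pow_succ'] at this

theorem Adj.sum {ι : Type*} (s : Finset ι) (f : ι → Module.End ℂ (ℕ →₀ ℂ))
    (h : ∀ i ∈ s, Adj (f i) (f i)) : Adj (∑ i ∈ s, f i) (∑ i ∈ s, f i) := by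
  intro j k
  simp only [LinearMap.sum_apply, Finsupp.finsetSum_apply, map_sum]
  exact Finset.sum_congr rfl fun i hi => h i hi j k

theorem aop_zero : aop (e 0) = 0 := by simp [aop, e]
theorem aop_succ (n : ℕ) : aop (e (n + 1)) = ((Real.sqrt (n + 1) : ℝ) : ℂ) • e n := by
  simp [aop, e]
theorem adop_e (n : ℕ) : adop (e n) = ((Real.sqrt (n + 1) : ℝ) : ℂ) • e (n + 1) := by
  simp [adop, e]

theorem adj_a : Adj adop aop := by
  intro j k
  rw [adop_e]
  cases j with
  | zero => rw [aop_zero]; simp [e]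
  | succ j =>
    rw [aop_succ]
    by_cases h : k = j
    · subst h; simp [e]
    · simp [e, h, Finsupp.single_apply, Ne.symm h]

theorem adj_a' : Adj aop adop := by
  intro j k
  rw [adj_a k j]; simp

theorem adj_X : Adj Xop Xop := by
  have := (adj_a.add adj_a').smul_real (1 / 2)
  rw [add_comm aop adop] at this
  rw [show ((1 / 2 : ℝ) : ℂ) = 1 / 2 by push_cast; rfl] at this
  exact this

theorem adj_P (ℏ : ℝ) : Adj (Pop ℏ) (Pop ℏ) := by
  intro j k
  simp only [Pop, LinearMap.smul_apply, LinearMap.sub_apply, Finsupp.smul_apply,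
    Finsupp.sub_apply, adj_a j k, adj_a' j k, smul_eq_mul, map_mul, map_sub, conj_I, conj_ofReal]
  ring

theorem comm_a : aop * adop - adop * aop = (1 : Module.End ℂ (ℕ →₀ ℂ)) := by
  refine Finsupp.lhom_ext' fun n => LinearMap.ext_ring ?_
  change aop (adop (e n)) - adop (aop (e n)) = e n
  have h : ∀ n : ℕ, ((Real.sqrt (n + 1) : ℝ) : ℂ) * ((Real.sqrt (n + 1) : ℝ) : ℂ) = n + 1 := by
    intro n
    rw [← ofReal_mul, Real.mul_self_sqrt (by positivity)]; simp
  rw [adop_e, map_smul, aop_succ, smul_smul, h]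
  cases n with
  | zero => rw [aop_zero]; simp
  | succ n =>
    rw [aop_succ, map_smul, adop_e, smul_smul, h, ← sub_smul]
    simp

theorem comm_gen {R : Type*} [Ring R] [Algebra ℂ R] (a b : R) (h : a * b - b * a = 1) (c : ℂ) :
    ((1 / 2 : ℂ) • (b + a)) * (c • (b - a)) - (c • (b - a)) * ((1 / 2 : ℂ) • (b + a)) =
      c • (1 : R) := by
  rw [← h]
  simp only [smul_mul_smul_comm, mul_add, add_mul, mul_sub, sub_mul]
  module

theorem comm_XP (ℏ : ℝ) :
    Xop * Pop ℏ - Pop ℏ * Xop = (Complex.I * ℏ) • (1 : Module.End ℂ (ℕ →₀ ℂ)) := by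
  exact comm_gen (R := Module.End ℂ (ℕ →₀ ℂ)) aop adop comm_a (Complex.I * ℏ)

theorem sub_gen {R : Type*} [Ring R] (a b c : R) (h : a - b = c) : a = c + b :=
  sub_eq_iff_eq_add.1 h

theorem comm_XnP (ℏ : ℝ) (n : ℕ) :
    Xop ^ n * Pop ℏ = Pop ℏ * Xop ^ n + (Complex.I * ℏ * n) • Xop ^ (n - 1) := by
  have h : Xop * Pop ℏ = (Complex.I * ℏ) • (1 : Module.End ℂ (ℕ →₀ ℂ)) + Pop ℏ * Xop :=
    sub_gen (R := Module.End ℂ (ℕ →₀ ℂ)) _ _ _ (comm_XP ℏ)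
  induction n with
  | zero => simp
  | succ n ih =>
    rw [pow_succ, mul_assoc, h, mul_add, ← mul_assoc, ih]
    cases n with
    | zero => simp; abel
    | succ n =>
      simp only [Nat.add_sub_cancel, mul_smul_comm, mul_one, add_mul, smul_mul_assoc,
        ← pow_succ, mul_assoc]
      push_cast
      module

/-- Weyl-ordered monomials. -/
def W (ℏ : ℝ) : ℕ → ℕ → Module.End ℂ (ℕ →₀ ℂ)
  | 0, n => Xop ^ n
  | m + 1, n => Pop ℏ * W ℏ m n + (Complex.I * ℏ / 2 * n) • W ℏ m (n - 1)

theorem comm_W (ℏ : ℝ) (m n : ℕ) :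
    W ℏ m n * Pop ℏ = Pop ℏ * W ℏ m n + (Complex.I * ℏ * n) • W ℏ m (n - 1) := by
  induction m generalizing n with
  | zero => exact comm_XnP ℏ n
  | succ m ih =>
    simp only [W, add_mul, mul_add, smul_mul_assoc, mul_assoc, ih, mul_smul_comm, smul_add]
    module

theorem adj_W (ℏ : ℝ) (m n : ℕ) : Adj (W ℏ m n) (W ℏ m n) := by
  induction m with
  | zero => exact adj_X.pow n
  | succ m ih =>
    have h : W ℏ (m + 1) n = ((1 / 2 : ℝ) : ℂ) • (Pop ℏ * W ℏ m n + W ℏ m n * Pop ℏ) := by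
      rw [comm_W, W]
      push_cast
      module
    rw [h]
    have := (((adj_P ℏ).mul ih).add (ih.mul (adj_P ℏ))).smul_real (1 / 2)
    rwa [add_comm (W ℏ m n * Pop ℏ) (Pop ℏ * W ℏ m n)] at this

theorem W_choose (ℏ : ℝ) (m n : ℕ) : W ℏ m n = ∑ s ∈ Finset.range (m + 1),
    ((Complex.I * ℏ / 2) ^ s * (m.choose s * n.descFactorial s : ℕ)) •
      (Pop ℏ ^ (m - s) * Xop ^ (n - s)) := by
  induction m generalizing n with
  | zero => simp [W]
  | succ m ih =>
    rw [W, ih, ih]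
    have h1 : ∑ s ∈ Finset.range (m + 1 + 1),
        ((Complex.I * ℏ / 2) ^ s * ((m+1).choose s * n.descFactorial s : ℕ)) •
          (Pop ℏ ^ (m + 1 - s) * Xop ^ (n - s)) =
        ∑ s ∈ Finset.range (m + 1 + 1),
        ((Complex.I * ℏ / 2) ^ s * (m.choose s * n.descFactorial s : ℕ)) •
          (Pop ℏ ^ (m + 1 - s) * Xop ^ (n - s)) +
        ∑ s ∈ Finset.range (m + 1),
        ((Complex.I * ℏ / 2) ^ (s + 1) * (m.choose s * n.descFactorial (s + 1) : ℕ)) •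
          (Pop ℏ ^ (m - s) * Xop ^ (n - (s + 1))) := by
      rw [Finset.sum_range_succ' _ (m + 1), Finset.sum_range_succ' _ (m + 1), add_right_comm,
        ← Finset.sum_add_distrib]
      congr 1
      · refine Finset.sum_congr rfl fun s _ => ?_
        rw [Nat.choose_succ_succ, Nat.add_sub_add_right]
        push_cast
        module
      · simp
    rw [h1, Finset.sum_range_succ _ (m + 1), Nat.choose_succ_self]
    simp only [zero_mul, Nat.cast_zero, mul_zero, zero_smul, add_zero]
    congr 1
    · rw [Finset.mul_sum]
      refine Finset.sum_congr rfl fun s hs => ?_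
      rw [mul_smul_comm, ← mul_assoc, ← pow_succ', Nat.sub_add_comm (by grind)]
    · rw [Finset.smul_sum]
      refine Finset.sum_congr rfl fun s hs => ?_
      cases n with
      | zero => simp
      | succ n =>
        rw [Nat.succ_descFactorial_succ, smul_smul, Nat.add_sub_add_right n 1 s, Nat.add_sub_cancel]
        congr 1
        push_cast
        ring

theorem W_fact (ℏ : ℝ) (m n : ℕ) : W ℏ m n = ∑ s ∈ Finset.range (min m n + 1),
    ((Complex.I * ℏ / 2) ^ s * ((m.factorial * n.factorial : ℂ) /
      ((m - s).factorial * (n - s).factorial * s.factorial))) •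
      (Pop ℏ ^ (m - s) * Xop ^ (n - s)) := by
  rw [W_choose]
  symm
  have hsub : Finset.range (min m n + 1) ⊆ Finset.range (m + 1) := by
    intro s; simp only [Finset.mem_range]; omega
  have h0 : ∀ s ∈ Finset.range (m + 1), s ∉ Finset.range (min m n + 1) →
    ((Complex.I * ℏ / 2) ^ s * (m.choose s * n.descFactorial s : ℕ)) •
      (Pop ℏ ^ (m - s) * Xop ^ (n - s)) = 0 := by
    intro s h1 h2
    simp only [Finset.mem_range] at h1 h2
    rw [Nat.descFactorial_of_lt (show n < s by omega)]
    simp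
  rw [← Finset.sum_subset hsub h0]
  refine Finset.sum_congr rfl fun s hs => ?_
  have hm : s ≤ m := by simp only [Finset.mem_range] at hs; omega
  have hn : s ≤ n := by simp only [Finset.mem_range] at hs; omega
  have e1 : ((m.choose s : ℂ)) * s.factorial * (m - s).factorial = m.factorial := by
    exact_mod_cast Nat.choose_mul_factorial_mul_factorial hm
  have e2 : ((n - s).factorial : ℂ) * n.descFactorial s = n.factorial := by
    exact_mod_cast Nat.factorial_mul_descFactorial hn
  congr 2
  rw [← e1, ← e2]
  have := Nat.cast_ne_zero (R := ℂ) |>.2 (Nat.factorial_ne_zero s)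
  have := Nat.cast_ne_zero (R := ℂ) |>.2 (Nat.factorial_ne_zero (m - s))
  have := Nat.cast_ne_zero (R := ℂ) |>.2 (Nat.factorial_ne_zero (n - s))
  push_cast
  field_simp

theorem psi_eq (ℏ : ℝ) (α : ℕ → ℝ) (m n : ℕ) :
    ∑ s ∈ Finset.range (min m n + 1),
        (gα α m n s * (ℏ : ℂ) ^ s) • (Pop ℏ ^ (m - s) * Xop ^ (n - s)) =
    ∑ k ∈ Finset.range (min m n + 1),
      (((-ℏ) ^ k * α k * ((m.factorial * n.factorial : ℝ) /
        ((m - k).factorial * (n - k).factorial)) : ℝ) : ℂ) • W ℏ (m - k) (n - k) := by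
  have h1 : ∀ s, (gα α m n s * (ℏ : ℂ) ^ s) • (Pop ℏ ^ (m - s) * Xop ^ (n - s)) =
      ∑ k ∈ Finset.range (s + 1), ((Complex.I / 2) ^ s *
        ((m.factorial * n.factorial : ℂ) / ((m - s).factorial * (n - s).factorial)) *
        ((2 * Complex.I) ^ k * (α k : ℂ) / ((s - k).factorial : ℂ)) * (ℏ : ℂ) ^ s) •
        (Pop ℏ ^ (m - s) * Xop ^ (n - s)) := by
    intro s
    rw [gα, Finset.mul_sum, Finset.sum_mul, Finset.sum_smul]
  simp only [h1]
  rw [Finset.sum_comm' (t' := Finset.range (min m n + 1))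
    (s' := fun k => Finset.Ico k (min m n + 1)) (by
      intro x y; simp only [Finset.mem_range, Finset.mem_Ico]; omega)]
  refine Finset.sum_congr rfl fun k hk => ?_
  simp only [Finset.mem_range] at hk
  rw [Finset.sum_Ico_eq_sum_range, W_fact, Finset.smul_sum,
    show min m n + 1 - k = min (m - k) (n - k) + 1 by omega]
  refine Finset.sum_congr rfl fun t ht => ?_
  rw [smul_smul, Nat.sub_sub, Nat.sub_sub, Nat.add_sub_cancel_left]
  congr 1
  have := Nat.cast_ne_zero (R := ℂ) |>.2 (Nat.factorial_ne_zero t)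
  have := Nat.cast_ne_zero (R := ℂ) |>.2 (Nat.factorial_ne_zero (m - k))
  have := Nat.cast_ne_zero (R := ℂ) |>.2 (Nat.factorial_ne_zero (n - k))
  have := Nat.cast_ne_zero (R := ℂ) |>.2 (Nat.factorial_ne_zero (m - (k + t)))
  have := Nat.cast_ne_zero (R := ℂ) |>.2 (Nat.factorial_ne_zero (n - (k + t)))
  have hI : (Complex.I / 2) ^ k * (2 * Complex.I) ^ k = (-1) ^ k := by
    rw [← mul_pow]; congr 1; linear_combination Complex.I_mul_I
  have hI2 : (Complex.I * ℏ / 2) ^ t = (Complex.I / 2) ^ t * (ℏ : ℂ) ^ t := by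
    rw [← mul_pow]; congr 1; ring
  rw [hI2]
  push_cast
  rw [neg_pow, ← hI, pow_add, pow_add]
  generalize (Complex.I / 2) ^ k = A
  generalize (Complex.I / 2) ^ t = B
  generalize (2 * Complex.I) ^ k = C
  field_simp

theorem adj_mono (ℏ : ℝ) (α : ℕ → ℝ)
    (Ψ : Pxp →ₗ[ℂ] Module.End ℂ (ℕ →₀ ℂ))
    (hΨ : ∀ m n : ℕ, Ψ (pv ^ m * xv ^ n) =
      ∑ s ∈ Finset.range (min m n + 1),
        (gα α m n s * (ℏ : ℂ) ^ s) • (Pop ℏ ^ (m - s) * Xop ^ (n - s))) (m n : ℕ) :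
    Adj (Ψ (pv ^ m * xv ^ n)) (Ψ (pv ^ m * xv ^ n)) := by
  rw [hΨ, psi_eq]
  exact Adj.sum _ _ fun k _ => (adj_W ℏ _ _).smul_real _

/-- `X` and `P` satisfy `XP − PX = iℏ`, and for a real sequence `α` with
`α 0 = 1`, the map `Ψ_α(p^m x^n) = Σ_s g_α(m,n,s) ℏ^s P^{m−s} X^{n−s}` sends every real
polynomial to an operator symmetric with respect to the standard basis. -/
theorem stmt16 (ℏ : ℝ) (hℏ : ℏ ≠ 0) (α : ℕ → ℝ) (hα : α 0 = 1)
    (Ψ : Pxp →ₗ[ℂ] Module.End ℂ (ℕ →₀ ℂ))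
    (hΨ : ∀ m n : ℕ, Ψ (pv ^ m * xv ^ n) =
      ∑ s ∈ Finset.range (min m n + 1),
        (gα α m n s * (ℏ : ℂ) ^ s) • (Pop ℏ ^ (m - s) * Xop ^ (n - s))) :
    Xop * Pop ℏ - Pop ℏ * Xop = (Complex.I * ℏ) • (1 : Module.End ℂ (ℕ →₀ ℂ)) ∧
    ∀ A : Pxp, (∀ d : Fin 2 →₀ ℕ, (MvPolynomial.coeff d A).im = 0) →
      ∀ j k : ℕ, (Ψ A (e k)) j = (starRingEnd ℂ) ((Ψ A (e j)) k) := by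
  refine ⟨comm_XP ℏ, fun A hA => ?_⟩
  change Adj (Ψ A) (Ψ A)
  rw [A.as_sum, map_sum]
  refine Adj.sum _ _ fun d _ => ?_
  have h : monomial d (coeff d A) = (((coeff d A).re : ℝ) : ℂ) • (pv ^ (d 1) * xv ^ (d 0)) := by
    have hc : (((coeff d A).re : ℝ) : ℂ) = coeff d A := by
      apply Complex.ext <;> simp [hA d]
    rw [hc, monomial_eq, Finsupp.prod_fintype _ _ (by simp), Fin.prod_univ_two, smul_eq_C_mul,
      pv, xv, mul_comm (X 0 ^ _)]
  rw [h, map_smul]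
  exact (adj_mono ℏ α Ψ hΨ _ _).smul_real _

end
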